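/- Let p be a prime, (A ⊆ B) a pair of finite abelian p-groups, and 1 ≤ r ≤ m−2 integers. For u ≥ 0 set M_u = B/(p²A + p(A ∩ p^uB)), and for u ≥ 1, v ≥ 1 set d(u,v) = dim_{𝔽_p}(p^{v−1}M_u/p^vM_u) − dim_{𝔽_p}(p^{v−1}M_{u−1}/p^vM_{u−1}). Let b = Σ_{v=r+2}^{m} Σ_{u=1}^{r} d(u,v). Then the cardinalities of morphism sets of pairs satisfy #Hom((A⊆B), T_2^{m,r}) · #Hom((A⊆B), P_1^{r+1}) = p^b · #Hom((A⊆B), P_2^{r+1}) · #Hom((A⊆B), P_0^r) · #Hom((A⊆B), P_1^m). -/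

import Mathlib

/-- Multiplication by `k` as an additive endomorphism of `M`. -/
def pMul (k : ℕ) (M : Type) [AddCommGroup M] : M →+ M :=
  AddMonoidHom.mk' (fun x => k • x) fun a b => smul_add k a b


theorem aux_enough (n : ℕ) [NeZero n] : HasEnoughRootsOfUnity (Multiplicative (ZMod n)) n where
  prim := by
    refine ⟨Multiplicative.ofAdd 1, ?_⟩
    have h := IsPrimitiveRoot.orderOf (Multiplicative.ofAdd (1 : ZMod n))
    rwa [orderOf_ofAdd_eq_addOrderOf, ZMod.addOrderOf_one] at h
  cyc := by
    have : IsCyclic (Multiplicative (ZMod n)) := inferInstance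
    have : IsCyclic (Multiplicative (ZMod n))ˣ :=
      isCyclic_of_surjective (toUnits (G := Multiplicative (ZMod n))) (MulEquiv.surjective _)
    infer_instance

theorem aux_enough' (n : ℕ) [NeZero n] (G : Type*) [AddCommGroup G] [Finite G]
    (hG : ∀ x : G, n • x = 0) :
    HasEnoughRootsOfUnity (Multiplicative (ZMod n)) (Monoid.exponent (Multiplicative G)) := by
  have := aux_enough n
  refine HasEnoughRootsOfUnity.of_dvd _ (n := n) ?_
  refine Monoid.exponent_dvd_of_forall_pow_eq_one fun g => ?_
  exact hG (Multiplicative.toAdd g)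

theorem aux_card (n : ℕ) [NeZero n] (G : Type*) [AddCommGroup G] [Finite G]
    (hG : ∀ x : G, n • x = 0) : Nat.card (G →+ ZMod n) = Nat.card G := by
  have := aux_enough' n G hG
  have h := CommGroup.card_monoidHom_of_hasEnoughRootsOfUnity (Multiplicative G)
    (Multiplicative (ZMod n))
  rw [Nat.card_congr (Multiplicative.toAdd (α := G))] at h
  rw [← h]
  refine Nat.card_congr (AddMonoidHom.toMultiplicative.trans ?_)
  exact (MulEquiv.monoidHomCongrRight
    (toUnits (G := Multiplicative (ZMod n)))).toEquiv

theorem aux_extend (n : ℕ) [NeZero n] (G : Type*) [AddCommGroup G] [Finite G]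
    (hG : ∀ x : G, n • x = 0) (H : AddSubgroup G) (φ : H →+ ZMod n) :
    ∃ g : G →+ ZMod n, ∀ x : H, g x = φ x := by
  have := aux_enough' n G hG
  obtain ⟨g, hg⟩ := MonoidHom.domRestrict_surjective (Multiplicative (ZMod n))
    (AddSubgroup.toSubgroup H)
    ((toUnits (G := Multiplicative (ZMod n))).toMonoidHom.comp (AddMonoidHom.toMultiplicative φ))
  refine ⟨AddMonoidHom.toMultiplicative.symm
    ((toUnits (G := Multiplicative (ZMod n))).symm.toMonoidHom.comp g), fun x => ?_⟩
  have := DFunLike.congr_fun hg x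
  have h2 := congrArg (fun z => (toUnits (G := Multiplicative (ZMod n))).symm z) this
  simpa using! h2

theorem aux_extend2 (n : ℕ) [NeZero n] (B : Type) [AddCommGroup B] [Finite B]
    (A : AddSubgroup B) (φ : A →+ ZMod n)
    (hφ : ∀ a : A, (a : B) ∈ (pMul n B).range → φ a = 0) :
    ∃ g : B →+ ZMod n, ∀ a : A, g a = φ a := by
  let π := QuotientAddGroup.mk' (pMul n B).range
  let ψ : A →+ B ⧸ (pMul n B).range := π.comp A.subtype
  have hk : ψ.rangeRestrict.ker ≤ φ.ker := by
    intro a ha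
    rw [AddMonoidHom.ker_rangeRestrict] at ha
    refine hφ a ?_
    exact (QuotientAddGroup.eq_zero_iff _).1 ha
  let φ' := AddMonoidHom.liftOfSurjective ψ.rangeRestrict ψ.rangeRestrict_surjective ⟨φ, hk⟩
  obtain ⟨g, hg⟩ := aux_extend n (B ⧸ (pMul n B).range) (by
    intro x
    obtain ⟨x, rfl⟩ := QuotientAddGroup.mk_surjective x
    exact (QuotientAddGroup.eq_zero_iff (n • x)).2 ⟨x, rfl⟩) ψ.range φ'
  refine ⟨g.comp π, fun a => ?_⟩
  have := hg (ψ.rangeRestrict a)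
  refine this.trans ?_
  exact AddMonoidHom.liftOfRightInverse_comp_apply _ _ _ ⟨φ, hk⟩ a

theorem aux_cardH (n : ℕ) [NeZero n] (B : Type) [AddCommGroup B] [Finite B]
    (H : AddSubgroup B) :
    Nat.card {f : B →+ ZMod n // ∀ x ∈ H, f x = 0} = (H ⊔ (pMul n B).range).index := by
  have h := aux_card n (B ⧸ (H ⊔ (pMul n B).range)) (by
    intro x
    obtain ⟨x, rfl⟩ := QuotientAddGroup.mk_surjective x
    exact (QuotientAddGroup.eq_zero_iff (n • x)).2 (AddSubgroup.mem_sup_right ⟨x, rfl⟩))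
  rw [AddSubgroup.index, ← h]
  refine Nat.card_congr ⟨fun f => QuotientAddGroup.lift _ f.1 ?_, fun g =>
    ⟨g.comp (QuotientAddGroup.mk' _), ?_⟩, ?_, ?_⟩
  · refine sup_le f.2 ?_
    rintro _ ⟨x, rfl⟩
    change f.1 (n • x) = 0
    simp
  · intro x hx
    have : (QuotientAddGroup.mk' (H ⊔ (pMul n B).range)) x = 0 :=
      (QuotientAddGroup.eq_zero_iff x).2 (AddSubgroup.mem_sup_left hx)
    simp only [AddMonoidHom.comp_apply, this, map_zero]
  · intro f
    ext x
    rfl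
  · intro g
    ext x
    rfl

theorem aux_zm (p : ℕ) (hp : p.Prime) (j l : ℕ) (hl : l ≤ j) (x : ZMod (p ^ j)) :
    x ∈ AddSubgroup.zmultiples ((p : ZMod (p ^ j)) ^ (j - l)) ↔ p ^ l • x = 0 := by
  obtain ⟨i, rfl⟩ := Nat.exists_eq_add_of_le' hl
  obtain ⟨x, rfl⟩ := ZMod.intCast_surjective x
  rw [AddSubgroup.mem_zmultiples_iff, Nat.add_sub_cancel]
  have e : p ^ l • (x : ZMod (p ^ (i + l))) = ((p ^ l * x : ℤ) : ZMod (p ^ (i + l))) := by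
    push_cast
    simp
  have hp0 : (p : ℤ) ≠ 0 := by exact_mod_cast hp.ne_zero
  rw [e, ZMod.intCast_zmod_eq_zero_iff_dvd]
  push_cast
  rw [pow_add (p : ℤ), mul_comm ((p : ℤ) ^ i), mul_dvd_mul_iff_left (pow_ne_zero _ hp0)]
  constructor
  · rintro ⟨k, hk⟩
    have : ((k * p ^ i - x : ℤ) : ZMod (p ^ (i + l))) = 0 := by
      push_cast
      rw [← hk]; simp
    rw [ZMod.intCast_zmod_eq_zero_iff_dvd] at this
    push_cast at this
    have h1 : (p : ℤ) ^ i ∣ k * p ^ i - x := (pow_dvd_pow _ (by omega)).trans this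
    have := dvd_sub (Dvd.intro_left k rfl) h1
    simpa using this
  · rintro ⟨k, rfl⟩
    refine ⟨k, ?_⟩
    push_cast
    simp [mul_comm]

theorem aux_picket (p : ℕ) (hp : p.Prime) (B : Type) [AddCommGroup B] [Finite B]
    (A : AddSubgroup B) (j l : ℕ) (hl : l ≤ j) :
    Nat.card {f : B →+ ZMod (p ^ j) //
        ∀ a ∈ A, f a ∈ AddSubgroup.zmultiples ((p : ZMod (p ^ j)) ^ (j - l))} =
      (A.map (pMul (p ^ l) B) ⊔ (pMul (p ^ j) B).range).index := by
  have : NeZero (p ^ j) := ⟨pow_ne_zero _ hp.ne_zero⟩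
  rw [← aux_cardH]
  refine Nat.card_congr (Equiv.subtypeEquivRight fun f => ?_)
  simp only [aux_zm p hp j l hl, AddSubgroup.mem_map, forall_exists_index, and_imp,
    forall_apply_eq_imp_iff₂]
  refine forall₂_congr fun a _ => ?_
  change _ ↔ f (p ^ l • a) = 0
  rw [map_nsmul]

theorem aux_nat (p : ℕ) (hp : p.Prime) (j : ℕ) (c i : ℕ) (k : ℤ) (h : c + i = j) :
    k • ((p : ZMod (p ^ j)) ^ c) = 0 ↔ (p : ℤ) ^ i ∣ k := by
  have hp0 : (p : ℤ) ≠ 0 := by exact_mod_cast hp.ne_zero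
  have e : k • ((p : ZMod (p ^ j)) ^ c) = ((p ^ c * k : ℤ) : ZMod (p ^ j)) := by
    push_cast
    simp [mul_comm]
  rw [e, ZMod.intCast_zmod_eq_zero_iff_dvd, ← h]
  push_cast
  rw [pow_add (p : ℤ), mul_dvd_mul_iff_left (pow_ne_zero _ hp0)]

theorem aux_Z1 (p : ℕ) (hp : p.Prime) (m r : ℕ) (h1 : 1 ≤ r) (h2 : r + 2 ≤ m)
    (x : ZMod (p ^ m)) (y : ZMod (p ^ r))
    (h : (x, y) ∈ AddSubgroup.zmultiples
          ((p : ZMod (p ^ m)) ^ (m - 2), (p : ZMod (p ^ r)) ^ (r - 1))) :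
    p ^ 2 • x = 0 ∧ (p • x = 0 ↔ y = 0) := by
  have hp0 : (p : ℤ) ≠ 0 := by exact_mod_cast hp.ne_zero
  obtain ⟨k, hk⟩ := AddSubgroup.mem_zmultiples_iff.1 h
  rw [Prod.smul_mk, Prod.mk.injEq] at hk
  obtain ⟨rfl, rfl⟩ := hk
  constructor
  · rw [← natCast_zsmul, smul_smul, aux_nat p hp m _ 2 _ (by omega)]
    push_cast
    exact Dvd.intro _ rfl
  · rw [← natCast_zsmul, smul_smul, aux_nat p hp m _ 2 _ (by omega),
      aux_nat p hp r _ 1 _ (by omega), pow_two, pow_one, mul_dvd_mul_iff_left hp0]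

theorem aux_Z4 (p : ℕ) (hp : p.Prime) (m r : ℕ) (h2 : r + 2 ≤ m)
    (x : ZMod (p ^ m)) (h : p ^ 2 • x = 0) :
    ∃ y, (x, y) ∈ AddSubgroup.zmultiples
          ((p : ZMod (p ^ m)) ^ (m - 2), (p : ZMod (p ^ r)) ^ (r - 1)) := by
  rw [← aux_zm p hp m 2 (by omega)] at h
  obtain ⟨k, hk⟩ := AddSubgroup.mem_zmultiples_iff.1 h
  refine ⟨k • (p : ZMod (p ^ r)) ^ (r - 1), AddSubgroup.mem_zmultiples_iff.2 ⟨k, ?_⟩⟩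
  rw [Prod.smul_mk, hk]

theorem aux_Nkill (p : ℕ) (B : Type) [AddCommGroup B] (A : AddSubgroup B) (r n : ℕ)
    (f : B →+ ZMod n) :
    (∀ x ∈ A.map (pMul (p ^ 2) B) ⊔ (A ⊓ (pMul (p ^ r) B).range).map (pMul p B), f x = 0) ↔
      (∀ a ∈ A, p ^ 2 • f a = 0) ∧ ∀ a ∈ A, a ∈ (pMul (p ^ r) B).range → p • f a = 0 := by
  constructor
  · intro h
    constructor
    · intro a ha
      rw [← map_nsmul]
      exact h _ (AddSubgroup.mem_sup_left ⟨a, ha, rfl⟩)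
    · intro a ha ha'
      rw [← map_nsmul]
      exact h _ (AddSubgroup.mem_sup_right ⟨a, ⟨ha, ha'⟩, rfl⟩)
  · rintro ⟨h, h'⟩
    change _ ≤ f.ker
    refine sup_le ?_ ?_
    · rintro _ ⟨a, ha, rfl⟩
      change f (p ^ 2 • a) = 0
      rw [map_nsmul]
      exact h a ha
    · rintro _ ⟨a, ha, rfl⟩
      change f (p • a) = 0
      rw [map_nsmul]
      exact h' a ha.1 ha.2

theorem aux_exists (p : ℕ) (hp : p.Prime) (B : Type) [AddCommGroup B] [Finite B]
    (A : AddSubgroup B) (m r : ℕ) (h1 : 1 ≤ r) (h2 : r + 2 ≤ m) (f : B →+ ZMod (p ^ m))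
    (h : ∀ a ∈ A, p ^ 2 • f a = 0)
    (h' : ∀ a ∈ A, a ∈ (pMul (p ^ r) B).range → p • f a = 0) :
    ∃ g : B →+ ZMod (p ^ r), ∀ a ∈ A, (f a, g a) ∈ AddSubgroup.zmultiples
          ((p : ZMod (p ^ m)) ^ (m - 2), (p : ZMod (p ^ r)) ^ (r - 1)) := by
  have : NeZero (p ^ r) := ⟨pow_ne_zero _ hp.ne_zero⟩
  choose y hy using fun a : A => aux_Z4 p hp m r h2 (f a) (h a a.2)
  let φ : A →+ ZMod (p ^ r) := AddMonoidHom.mk' y (by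
    intro a b
    have := sub_mem (hy (a + b)) (add_mem (hy a) (hy b))
    rw [Prod.mk_add_mk, Prod.mk_sub_mk] at this
    have := (aux_Z1 p hp m r h1 h2 _ _ this).2.1 (by simp)
    exact sub_eq_zero.1 this)
  obtain ⟨g, hg⟩ := aux_extend2 (p ^ r) B A φ (by
    intro a ha
    exact (aux_Z1 p hp m r h1 h2 _ _ (hy a)).2.1 (h' a a.2 ha))
  refine ⟨g, fun a ha => ?_⟩
  have e : g a = y ⟨a, ha⟩ := hg ⟨a, ha⟩
  rw [e]
  exact hy ⟨a, ha⟩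

theorem aux_T (p : ℕ) (hp : p.Prime) (B : Type) [AddCommGroup B] [Finite B]
    (A : AddSubgroup B) (m r : ℕ) (h1 : 1 ≤ r) (h2 : r + 2 ≤ m) :
    Nat.card {f : B →+ (ZMod (p ^ m) × ZMod (p ^ r)) //
        ∀ a ∈ A, f a ∈ AddSubgroup.zmultiples
          ((p : ZMod (p ^ m)) ^ (m - 2), (p : ZMod (p ^ r)) ^ (r - 1))} =
    ((A.map (pMul (p ^ 2) B) ⊔ (A ⊓ (pMul (p ^ r) B).range).map (pMul p B)) ⊔
      (pMul (p ^ m) B).range).index *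
    Nat.card {f : B →+ ZMod (p ^ r) //
          ∀ a ∈ A, f a ∈ AddSubgroup.zmultiples ((p : ZMod (p ^ r)) ^ (r - 0))} := by
  have : NeZero (p ^ m) := ⟨pow_ne_zero _ hp.ne_zero⟩
  rw [← aux_cardH, ← Nat.card_prod]
  simp only [aux_Nkill, aux_zm p hp r 0 (Nat.zero_le _), pow_zero, one_smul]
  choose g hg using fun f : {f : B →+ ZMod (p ^ m) // (∀ a ∈ A, p ^ 2 • f a = 0) ∧
    ∀ a ∈ A, a ∈ (pMul (p ^ r) B).range → p • f a = 0} =>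
      aux_exists p hp B A m r h1 h2 f.1 f.2.1 f.2.2
  let F : {f : B →+ (ZMod (p ^ m) × ZMod (p ^ r)) //
        ∀ a ∈ A, f a ∈ AddSubgroup.zmultiples
          ((p : ZMod (p ^ m)) ^ (m - 2), (p : ZMod (p ^ r)) ^ (r - 1))} →
      {f : B →+ ZMod (p ^ m) // (∀ a ∈ A, p ^ 2 • f a = 0) ∧
    ∀ a ∈ A, a ∈ (pMul (p ^ r) B).range → p • f a = 0} := fun t =>
    ⟨(AddMonoidHom.fst _ _).comp t.1, fun a ha => (aux_Z1 p hp m r h1 h2 _ _ (t.2 a ha)).1, by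
      rintro a ha ⟨b, rfl⟩
      refine (aux_Z1 p hp m r h1 h2 _ _ (t.2 _ ha)).2.2 ?_
      change (t.1 (p ^ r • b)).2 = 0
      rw [map_nsmul, Prod.smul_snd, nsmul_eq_mul, ZMod.natCast_self, zero_mul]⟩
  refine Nat.card_congr ⟨fun t => (F t, ⟨(AddMonoidHom.snd _ _).comp t.1 - g (F t), ?_⟩),
    fun s => ⟨s.1.1.prod (g s.1 + s.2.1), ?_⟩, ?_, ?_⟩
  · intro a ha
    have := sub_mem (t.2 a ha) (hg (F t) a ha)
    have e : t.1 a - ((F t).1 a, g (F t) a) = (0, (t.1 a).2 - g (F t) a) := by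
      ext
      · simp [F]
      · simp
    rw [e] at this
    exact (aux_Z1 p hp m r h1 h2 _ _ this).2.1 (by simp)
  · intro a ha
    have := hg s.1 a ha
    simpa [s.2.2 a ha] using this
  · intro t
    ext x <;> simp [F]
  · rintro ⟨s, u⟩
    ext x
    · simp [F]
    · change (g s + u.1) x - g s x = _
      simp

theorem aux_ratio (p : ℕ) (B : Type) [AddCommGroup B] (N : AddSubgroup B) (v : ℕ) :
    (pMul (p ^ v) (B ⧸ N)).range.relIndex (pMul (p ^ (v - 1)) (B ⧸ N)).range =
      (N ⊔ (pMul (p ^ v) B).range).relIndex (N ⊔ (pMul (p ^ (v - 1)) B).range) := by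
  have key (k : ℕ) : (pMul k (B ⧸ N)).range =
      (N ⊔ (pMul k B).range).map (QuotientAddGroup.mk' N) := by
    rw [AddSubgroup.map_sup, (AddSubgroup.map_eq_bot_iff _).2 (by simp), bot_sup_eq]
    ext x
    constructor
    · rintro ⟨y, rfl⟩
      obtain ⟨y, rfl⟩ := QuotientAddGroup.mk_surjective y
      exact ⟨k • y, ⟨y, rfl⟩, rfl⟩
    · rintro ⟨_, ⟨y, rfl⟩, rfl⟩
      exact ⟨QuotientAddGroup.mk' N y, rfl⟩
  rw [key (p ^ (v - 1)), ← AddSubgroup.relIndex_comap, key, AddSubgroup.comap_map_eq,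
    QuotientAddGroup.ker_mk', sup_right_comm, sup_idem]

theorem aux_range_anti (p : ℕ) (B : Type) [AddCommGroup B] {i j : ℕ} (h : i ≤ j) :
    (pMul (p ^ j) B).range ≤ (pMul (p ^ i) B).range := by
  obtain ⟨k, rfl⟩ := Nat.exists_eq_add_of_le h
  rintro _ ⟨x, rfl⟩
  refine ⟨p ^ k • x, ?_⟩
  change p ^ i • p ^ k • x = p ^ (i + k) • x
  rw [smul_smul, pow_add]

theorem aux_mono (B : Type) [AddCommGroup B] [Finite B] (H H' X Y : AddSubgroup B)
    (h : H ≤ H') (hYX : Y ≤ X) :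
    (H' ⊔ Y).relIndex (H' ⊔ X) ∣ (H ⊔ Y).relIndex (H ⊔ X) := by
  have e : H' ⊔ X = (H ⊔ X) ⊔ (H' ⊔ Y) := by
    apply le_antisymm
    · exact sup_le (le_sup_left.trans le_sup_right) (le_sup_right.trans le_sup_left)
    · exact sup_le (sup_le_sup_right h _) (sup_le_sup_left hYX _)
  rw [e, AddSubgroup.relIndex_sup_right]
  exact AddSubgroup.relIndex_dvd_of_le_left _ (sup_le_sup_right h _)

/-- For a pair `(A ⊆ B)` of finite abelian `p`-groups and `1 ≤ r ≤ m-2`, with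
`M_u = B/(p²A + p(A ∩ p^u B))`, `D u v = dim_{𝔽_p}(p^{v-1}M_u / p^v M_u)` and
`b = Σ_{v=r+2}^m Σ_{u=1}^r (D u v - D (u-1) v)`, the cardinalities of the morphism sets
of pairs satisfy
`#Hom((A⊆B), T_2^{m,r}) · #Hom((A⊆B), P_1^{r+1})
  = p^b · #Hom((A⊆B), P_2^{r+1}) · #Hom((A⊆B), P_0^r) · #Hom((A⊆B), P_1^m)`. -/
theorem stmt_18 (p : ℕ) (hp : p.Prime) (B : Type) [AddCommGroup B] [Fintype B]
    (hB : ∀ x : B, ∃ n : ℕ, p ^ n • x = 0)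
    (A : AddSubgroup B) (m r : ℕ) (h1 : 1 ≤ r) (h2 : r + 2 ≤ m)
    (N : ℕ → AddSubgroup B)
    (hN : ∀ u, N u =
      A.map (pMul (p ^ 2) B) ⊔ (A ⊓ (pMul (p ^ u) B).range).map (pMul p B))
    (D : ℕ → ℕ → ℕ)
    (hD : ∀ u v, Nat.card
        ((pMul (p ^ (v - 1)) (B ⧸ N u)).range ⧸
          ((pMul (p ^ v) (B ⧸ N u)).range.addSubgroupOf
            (pMul (p ^ (v - 1)) (B ⧸ N u)).range)) = p ^ D u v)
    (b : ℕ)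
    (hb : b = ∑ v ∈ Finset.Icc (r + 2) m, ∑ u ∈ Finset.Icc 1 r, (D u v - D (u - 1) v)) :
    Nat.card {f : B →+ (ZMod (p ^ m) × ZMod (p ^ r)) //
        ∀ a ∈ A, f a ∈ AddSubgroup.zmultiples
          ((p : ZMod (p ^ m)) ^ (m - 2), (p : ZMod (p ^ r)) ^ (r - 1))} *
      Nat.card {f : B →+ ZMod (p ^ (r + 1)) //
        ∀ a ∈ A, f a ∈ AddSubgroup.zmultiples ((p : ZMod (p ^ (r + 1))) ^ (r + 1 - 1))} =
    p ^ b *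
      (Nat.card {f : B →+ ZMod (p ^ (r + 1)) //
          ∀ a ∈ A, f a ∈ AddSubgroup.zmultiples ((p : ZMod (p ^ (r + 1))) ^ (r + 1 - 2))} *
        Nat.card {f : B →+ ZMod (p ^ r) //
          ∀ a ∈ A, f a ∈ AddSubgroup.zmultiples ((p : ZMod (p ^ r)) ^ (r - 0))} *
        Nat.card {f : B →+ ZMod (p ^ m) //
          ∀ a ∈ A, f a ∈ AddSubgroup.zmultiples ((p : ZMod (p ^ m)) ^ (m - 1))}) := by
  have hN0 : N 0 = A.map (pMul (p ^ 1) B) := by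
    rw [hN, pow_one]
    refine le_antisymm (sup_le ?_ ?_) ?_
    · rintro _ ⟨a, ha, rfl⟩
      refine ⟨p • a, nsmul_mem ha _, ?_⟩
      change p • p • a = p ^ 2 • a
      rw [smul_smul, pow_two]
    · exact AddSubgroup.map_mono inf_le_left
    · refine le_sup_of_le_right (AddSubgroup.map_mono (le_inf le_rfl ?_))
      intro a _
      exact ⟨a, by change p ^ 0 • a = a; simp⟩
  have hNr : N r ⊔ (pMul (p ^ (r + 1)) B).range =
      A.map (pMul (p ^ 2) B) ⊔ (pMul (p ^ (r + 1)) B).range := by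
    rw [hN]
    refine le_antisymm (sup_le (sup_le le_sup_left ?_) le_sup_right)
      (sup_le_sup_right le_sup_left _)
    refine le_sup_of_le_right ?_
    rintro _ ⟨_, ⟨_, b, rfl⟩, rfl⟩
    refine ⟨b, ?_⟩
    change p ^ (r + 1) • b = p • p ^ r • b
    rw [smul_smul, pow_succ']
  have hanti : ∀ u, N (u + 1) ≤ N u := by
    intro u
    rw [hN, hN]
    exact sup_le_sup_left (AddSubgroup.map_mono
      (inf_le_inf_left _ (aux_range_anti p B (Nat.le_succ u)))) _
  have hD' : ∀ u v, (N u ⊔ (pMul (p ^ v) B).range).relIndex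
      (N u ⊔ (pMul (p ^ (v - 1)) B).range) = p ^ D u v := by
    intro u v
    rw [← aux_ratio, ← hD]
    rfl
  have hmono : ∀ u v, D u v ≤ D (u + 1) v := by
    intro u v
    have := aux_mono B (N (u + 1)) (N u) (pMul (p ^ (v - 1)) B).range (pMul (p ^ v) B).range
      (hanti u) (aux_range_anti p B (Nat.sub_le v 1))
    rw [hD', hD'] at this
    exact (Nat.pow_dvd_pow_iff_le_right hp.one_lt).1 this
  have htel : ∀ v n, ∑ u ∈ Finset.Icc 1 n, (D u v - D (u - 1) v) + D 0 v = D n v := by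
    intro v n
    induction n with
    | zero => simp
    | succ n ih =>
      rw [Finset.sum_Icc_succ_top (by omega), Nat.add_sub_cancel]
      have := hmono n v
      omega
  have hprod : ∀ u k, p ^ (∑ v ∈ Finset.Icc (r + 2) (r + 1 + k), D u v) *
      (N u ⊔ (pMul (p ^ (r + 1)) B).range).index =
        (N u ⊔ (pMul (p ^ (r + 1 + k)) B).range).index := by
    intro u k
    induction k with
    | zero => simp
    | succ k ih =>
      rw [← add_assoc, Finset.sum_Icc_succ_top (by omega), pow_add, mul_right_comm, ih, ← hD',
        Nat.add_sub_cancel, mul_comm]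
      exact AddSubgroup.relIndex_mul_index
        (sup_le_sup_left (aux_range_anti p B (Nat.le_succ _)) _)
  obtain ⟨k, rfl⟩ : ∃ k, m = r + 1 + k := ⟨m - (r + 1), by omega⟩
  have hb' : b + ∑ v ∈ Finset.Icc (r + 2) (r + 1 + k), D 0 v =
      ∑ v ∈ Finset.Icc (r + 2) (r + 1 + k), D r v := by
    rw [hb, ← Finset.sum_add_distrib]
    exact Finset.sum_congr rfl fun v _ => htel v r
  have e0 := hprod 0 k
  have er := hprod r k
  rw [← hb', pow_add] at er
  rw [aux_T p hp B A _ r h1 h2, aux_picket p hp B A (r + 1) 1 (by omega),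
    aux_picket p hp B A (r + 1) 2 (by omega), aux_picket p hp B A (r + 1 + k) 1 (by omega),
    ← hN, ← hN0, ← hNr, ← e0, ← er]
  ring
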